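/- arXiv:1402.6279 — 2 statements merged into one kernel-verified Lean document; each statement's English description precedes it below -/
import Mathlib

section
/- (Proposition: degree decomposition of the Chern–Simons form) Fix an integer k ≥ 1 and for 0 ≤ l ≤ k−1 let a_l ∈ Ω be the coefficient of t^l in the expansion Tr(θ(Θ + tθ²)^{k−1}) = Σ_{l=0}^{k−1} a_l t^l, and define ω_{k+l,k−l−1} = (k!·l!/(k+l)!) a_l. Then the descent equations hold: ∂̄ω_{k,k−1} = Tr(Θ^k), ∂ω_{k+l,k−l−1} = ∂̄ω_{k+l+1,k−l−2} for 0 ≤ l ≤ k−2, and ∂ω_{2k−1,0} = 0; moreover ω_{2k−1,0} = (k!(k−1)!/(2k−1)!) Tr(θ^{2k−1}); consequently Tr(Θ^k) = (∂ + ∂̄)(Σ_{l=0}^{k−1} (−1)^l ω_{k+l,k−l−1}). -/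
/-- An abstract model of the Dolbeault double complex of `(p,q)`-forms on a complex
manifold: a bigraded associative `ℂ`-algebra `Ω = ⨁ Ω^{p,q}`, graded-commutative with
respect to total degree, with `ℂ`-linear operators `∂` (`pd`) and `∂̄` (`pdb`) of
bidegrees `(1,0)` and `(0,1)`, squaring to zero and anticommuting, satisfying the
graded Leibniz rule. -/
structure DolbeaultAlgebra (Ω : Type*) [Ring Ω] [Algebra ℂ Ω] where
  /-- the `ℂ`-subspace of elements of bidegree `(p,q)` -/
  deg : ℕ → ℕ → Submodule ℂ Ω
  one_mem : (1 : Ω) ∈ deg 0 0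
  mul_mem : ∀ {p q p' q'} {a b : Ω}, a ∈ deg p q → b ∈ deg p' q' →
    a * b ∈ deg (p + p') (q + q')
  gcomm : ∀ {p q p' q'} (a b : Ω), a ∈ deg p q → b ∈ deg p' q' →
    a * b = ((-1 : ℂ) ^ ((p + q) * (p' + q'))) • (b * a)
  /-- the operator `∂` -/
  pd : Ω →ₗ[ℂ] Ω
  /-- the operator `∂̄` -/
  pdb : Ω →ₗ[ℂ] Ω
  pd_mem : ∀ {p q} {a : Ω}, a ∈ deg p q → pd a ∈ deg (p + 1) q
  pdb_mem : ∀ {p q} {a : Ω}, a ∈ deg p q → pdb a ∈ deg p (q + 1)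
  pd_pd : ∀ a : Ω, pd (pd a) = 0
  pdb_pdb : ∀ a : Ω, pdb (pdb a) = 0
  pd_pdb : ∀ a : Ω, pd (pdb a) + pdb (pd a) = 0
  pd_leibniz : ∀ {p q} (a b : Ω), a ∈ deg p q →
    pd (a * b) = pd a * b + ((-1 : ℂ) ^ (p + q)) • (a * pd b)
  pdb_leibniz : ∀ {p q} (a b : Ω), a ∈ deg p q →
    pdb (a * b) = pdb a * b + ((-1 : ℂ) ^ (p + q)) • (a * pdb b)

namespace DolbeaultAlgebra

variable {Ω : Type*} [Ring Ω] [Algebra ℂ Ω] {r : ℕ}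

/-- the entrywise extension of `∂` to `r × r` matrices over `Ω` -/
def mpd (A : DolbeaultAlgebra Ω) (M : Matrix (Fin r) (Fin r) Ω) :
    Matrix (Fin r) (Fin r) Ω := M.map A.pd

/-- the entrywise extension of `∂̄` to `r × r` matrices over `Ω` -/
def mpdb (A : DolbeaultAlgebra Ω) (M : Matrix (Fin r) (Fin r) Ω) :
    Matrix (Fin r) (Fin r) Ω := M.map A.pdb

/-- the assertion that all entries of a matrix lie in `Ω^{p,q}` -/
def MatDeg (A : DolbeaultAlgebra Ω) (p q : ℕ) (M : Matrix (Fin r) (Fin r) Ω) : Prop :=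
  ∀ i j, M i j ∈ A.deg p q

end DolbeaultAlgebra

variable {Ω : Type*} [Ring Ω] [Algebra ℂ Ω]

namespace DolbeaultAlgebra

/-- span of the homogeneous elements of parity sign `s` -/
def par (A : DolbeaultAlgebra Ω) (s : ℂ) : Submodule ℂ Ω :=
  Submodule.span ℂ {x | ∃ p q, (-1 : ℂ) ^ (p + q) = s ∧ x ∈ A.deg p q}

theorem par_mul (A : DolbeaultAlgebra Ω) {s s' : ℂ} {x y : Ω} (hx : x ∈ A.par s)
    (hy : y ∈ A.par s') : x * y ∈ A.par (s * s') := by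
  induction hx using Submodule.span_induction with
  | zero => simp
  | add a b _ _ ha hb => rw [add_mul]; exact add_mem ha hb
  | smul c a _ ha => rw [smul_mul_assoc]; exact Submodule.smul_mem _ _ ha
  | mem a ha =>
    obtain ⟨p, q, hs, ha⟩ := ha
    induction hy using Submodule.span_induction with
    | zero => simp
    | add a b _ _ ha hb => rw [mul_add]; exact add_mem ha hb
    | smul c a _ ha => rw [mul_smul_comm]; exact Submodule.smul_mem _ _ ha
    | mem b hb =>
      obtain ⟨p', q', hs', hb⟩ := hb
      refine Submodule.subset_span ⟨p + p', q + q', ?_, A.mul_mem ha hb⟩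
      rw [← hs, ← hs']; ring

theorem par_comm_even (A : DolbeaultAlgebra Ω) {s : ℂ} {x y : Ω} (hx : x ∈ A.par 1)
    (hy : y ∈ A.par s) : x * y = y * x := by
  induction hx using Submodule.span_induction with
  | zero => simp
  | add a b _ _ ha hb => rw [add_mul, mul_add, ha, hb]
  | smul c a _ ha => rw [smul_mul_assoc, mul_smul_comm, ha]
  | mem a ha =>
    obtain ⟨p, q, hs, ha⟩ := ha
    induction hy using Submodule.span_induction with
    | zero => simp
    | add a b _ _ ha hb => rw [add_mul, mul_add, ha, hb]
    | smul c a _ ha => rw [smul_mul_assoc, mul_smul_comm, ha]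
    | mem b hb =>
      obtain ⟨p', q', hs', hb⟩ := hb
      rw [A.gcomm a b ha hb, pow_mul, hs, one_pow, one_smul]

theorem par_comm_odd (A : DolbeaultAlgebra Ω) {x y : Ω} (hx : x ∈ A.par (-1))
    (hy : y ∈ A.par (-1)) : x * y = -(y * x) := by
  induction hx using Submodule.span_induction with
  | zero => simp
  | add a b _ _ ha hb => rw [add_mul, mul_add, ha, hb]; abel
  | smul c a _ ha => rw [smul_mul_assoc, mul_smul_comm, ha, smul_neg]
  | mem a ha =>
    obtain ⟨p, q, hs, ha⟩ := ha
    induction hy using Submodule.span_induction with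
    | zero => simp
    | add a b _ _ ha hb => rw [add_mul, mul_add, ha, hb]; abel
    | smul c a _ ha => rw [smul_mul_assoc, mul_smul_comm, ha, smul_neg]
    | mem b hb =>
      obtain ⟨p', q', hs', hb⟩ := hb
      rw [A.gcomm a b ha hb, pow_mul, hs, hs', neg_smul, one_smul]

theorem par_pd (A : DolbeaultAlgebra Ω) {s : ℂ} {x : Ω} (y : Ω) (hx : x ∈ A.par s) :
    A.pd (x * y) = A.pd x * y + s • (x * A.pd y) := by
  induction hx using Submodule.span_induction with
  | zero => simp
  | add a b _ _ ha hb => simp only [add_mul, map_add, ha, hb, smul_add]; abel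
  | smul c a _ ha =>
    simp only [smul_mul_assoc, map_smul, ha, smul_add]; rw [smul_comm]
  | mem a ha =>
    obtain ⟨p, q, hs, ha⟩ := ha
    rw [A.pd_leibniz a y ha, hs]

theorem par_pdb (A : DolbeaultAlgebra Ω) {s : ℂ} {x : Ω} (y : Ω) (hx : x ∈ A.par s) :
    A.pdb (x * y) = A.pdb x * y + s • (x * A.pdb y) := by
  induction hx using Submodule.span_induction with
  | zero => simp
  | add a b _ _ ha hb => simp only [add_mul, map_add, ha, hb, smul_add]; abel
  | smul c a _ ha =>
    simp only [smul_mul_assoc, map_smul, ha, smul_add]; rw [smul_comm]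
  | mem a ha =>
    obtain ⟨p, q, hs, ha⟩ := ha
    rw [A.pdb_leibniz a y ha, hs]

/-- all entries of parity sign `s` -/
def MPar (A : DolbeaultAlgebra Ω) {r : ℕ} (s : ℂ) (M : Matrix (Fin r) (Fin r) Ω) : Prop :=
  ∀ i j, M i j ∈ A.par s

variable {r : ℕ} {M N : Matrix (Fin r) (Fin r) Ω}

theorem MPar.mul {A : DolbeaultAlgebra Ω} {s s' : ℂ} (hM : A.MPar s M) (hN : A.MPar s' N) :
    A.MPar (s * s') (M * N) := by
  intro i j
  rw [Matrix.mul_apply]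
  exact Submodule.sum_mem _ fun l _ => A.par_mul (hM i l) (hN l j)

theorem MPar.add {A : DolbeaultAlgebra Ω} {s : ℂ} (hM : A.MPar s M) (hN : A.MPar s N) :
    A.MPar s (M + N) := fun i j => add_mem (hM i j) (hN i j)

theorem MPar.pd_mul {A : DolbeaultAlgebra Ω} {s : ℂ} (hM : A.MPar s M)
    (N : Matrix (Fin r) (Fin r) Ω) :
    A.mpd (M * N) = A.mpd M * N + s • (M * A.mpd N) := by
  ext i j
  simp only [mpd, Matrix.map_apply, Matrix.add_apply, Matrix.smul_apply, Matrix.mul_apply,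
    map_sum, Finset.smul_sum, ← Finset.sum_add_distrib]
  exact Finset.sum_congr rfl fun l _ => A.par_pd _ (hM i l)

theorem MPar.pdb_mul {A : DolbeaultAlgebra Ω} {s : ℂ} (hM : A.MPar s M)
    (N : Matrix (Fin r) (Fin r) Ω) :
    A.mpdb (M * N) = A.mpdb M * N + s • (M * A.mpdb N) := by
  ext i j
  simp only [mpdb, Matrix.map_apply, Matrix.add_apply, Matrix.smul_apply, Matrix.mul_apply,
    map_sum, Finset.smul_sum, ← Finset.sum_add_distrib]
  exact Finset.sum_congr rfl fun l _ => A.par_pdb _ (hM i l)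

theorem mpd_add (A : DolbeaultAlgebra Ω) (M N : Matrix (Fin r) (Fin r) Ω) :
    A.mpd (M + N) = A.mpd M + A.mpd N := by ext; simp [mpd]

theorem mpdb_add (A : DolbeaultAlgebra Ω) (M N : Matrix (Fin r) (Fin r) Ω) :
    A.mpdb (M + N) = A.mpdb M + A.mpdb N := by ext; simp [mpdb]

theorem pd_trace (A : DolbeaultAlgebra Ω) (M : Matrix (Fin r) (Fin r) Ω) :
    A.pd M.trace = (A.mpd M).trace := by simp [mpd, Matrix.trace]

theorem pdb_trace (A : DolbeaultAlgebra Ω) (M : Matrix (Fin r) (Fin r) Ω) :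
    A.pdb M.trace = (A.mpdb M).trace := by simp [mpdb, Matrix.trace]

theorem MPar.trace_even {A : DolbeaultAlgebra Ω} (hM : A.MPar 1 M) (hN : A.MPar 1 N) :
    (M * N).trace = (N * M).trace := by
  simp only [Matrix.trace, Matrix.diag_apply, Matrix.mul_apply]
  rw [Finset.sum_comm]
  exact Finset.sum_congr rfl fun i _ => Finset.sum_congr rfl fun j _ =>
    A.par_comm_even (hM _ _) (hN _ _)

theorem MPar.trace_odd {A : DolbeaultAlgebra Ω} (hM : A.MPar (-1) M) (hN : A.MPar (-1) N) :
    (M * N).trace = -(N * M).trace := by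
  simp only [Matrix.trace, Matrix.diag_apply, Matrix.mul_apply]
  rw [Finset.sum_comm]
  simp only [← Finset.sum_neg_distrib]
  exact Finset.sum_congr rfl fun i _ => Finset.sum_congr rfl fun j _ =>
    A.par_comm_odd (hM _ _) (hN _ _)

open Polynomial

/-- the polynomial `T + t B` over the matrix ring -/
noncomputable def cpol (T B : Matrix (Fin r) (Fin r) Ω) : (Matrix (Fin r) (Fin r) Ω)[X] :=
  C T + C B * X

section
variable (T B : Matrix (Fin r) (Fin r) Ω)

theorem cpol_zero (m : ℕ) : ((cpol T B) ^ (m + 1)).coeff 0 = T * ((cpol T B) ^ m).coeff 0 := by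
  rw [pow_succ', mul_coeff_zero]; simp [cpol]

theorem cpol_succ (m l : ℕ) : ((cpol T B) ^ (m + 1)).coeff (l + 1) =
    T * ((cpol T B) ^ m).coeff (l + 1) + B * ((cpol T B) ^ m).coeff l := by
  rw [pow_succ']
  conv_lhs => rw [cpol, add_mul, coeff_add, coeff_C_mul, mul_assoc, coeff_C_mul, coeff_X_mul]
  rfl

theorem cpol_zero' (m : ℕ) : ((cpol T B) ^ m).coeff 0 = T ^ m := by
  induction m with
  | zero => simp
  | succ m ih => rw [cpol_zero, ih, pow_succ']

theorem cpol_gt (m : ℕ) : ∀ l, m < l → ((cpol T B) ^ m).coeff l = 0 := by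
  induction m with
  | zero => intro l hl; rw [pow_zero, coeff_one, if_neg (by omega)]
  | succ m ih =>
    intro l hl
    obtain ⟨l, rfl⟩ : ∃ j, l = j + 1 := ⟨l - 1, by omega⟩
    rw [cpol_succ, ih _ (by omega), ih _ (by omega)]; simp

theorem cpol_top (m : ℕ) : ((cpol T B) ^ m).coeff m = B ^ m := by
  induction m with
  | zero => simp
  | succ m ih => rw [cpol_succ, ih, cpol_gt _ _ _ _ (by omega), mul_zero, zero_add, pow_succ']

theorem cpol_eval (t : ℂ) (m : ℕ) : (T + t • B) ^ m =
    ∑ l ∈ Finset.range (m + 1), t ^ l • ((cpol T B) ^ m).coeff l := by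
  induction m with
  | zero => simp
  | succ m ih =>
    rw [Finset.sum_range_succ', pow_succ', ih]
    simp only [cpol_succ, cpol_zero, smul_add, Finset.sum_add_distrib, pow_zero, one_smul]
    rw [add_mul]
    have h1 : T * ∑ l ∈ Finset.range (m + 1), t ^ l • ((cpol T B) ^ m).coeff l =
        ∑ l ∈ Finset.range (m + 1), t ^ (l + 1) • (T * ((cpol T B) ^ m).coeff (l + 1)) +
        T * ((cpol T B) ^ m).coeff 0 := by
      rw [Finset.sum_range_succ (fun l => t ^ (l + 1) • (T * ((cpol T B) ^ m).coeff (l + 1))) m,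
        cpol_gt _ _ m (m + 1) (by omega), Finset.sum_range_succ']
      simp [mul_add, Finset.mul_sum]
    have h2 : (t • B) * ∑ l ∈ Finset.range (m + 1), t ^ l • ((cpol T B) ^ m).coeff l =
        ∑ l ∈ Finset.range (m + 1), t ^ (l + 1) • (B * ((cpol T B) ^ m).coeff l) := by
      rw [Finset.mul_sum]
      refine Finset.sum_congr rfl fun l _ => ?_
      rw [smul_mul_assoc, mul_smul_comm, smul_smul, pow_succ']
    rw [h1, h2]; abel

variable {T B}

theorem cpol_par {A : DolbeaultAlgebra Ω} (hT : A.MPar 1 T) (hB : A.MPar 1 B) (m : ℕ) :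
    ∀ l, A.MPar 1 (((cpol T B) ^ m).coeff l) := by
  induction m with
  | zero =>
    intro l i j
    rw [pow_zero, coeff_one]
    split_ifs
    · rw [Matrix.one_apply]
      split_ifs
      · exact Submodule.subset_span ⟨0, 0, by simp, A.one_mem⟩
      · exact zero_mem _
    · exact zero_mem _
  | succ m ih =>
    intro l
    cases l with
    | zero => rw [cpol_zero]; simpa using hT.mul (ih 0)
    | succ l =>
      rw [cpol_succ]
      exact MPar.add (by simpa using hT.mul (ih (l + 1))) (by simpa using hB.mul (ih l))

theorem pol_par_mul {A : DolbeaultAlgebra Ω} {u v : (Matrix (Fin r) (Fin r) Ω)[X]}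
    (hu : ∀ l, A.MPar 1 (u.coeff l)) (hv : ∀ l, A.MPar 1 (v.coeff l)) (l : ℕ) :
    A.MPar 1 ((u * v).coeff l) := by
  intro i j
  rw [coeff_mul, Matrix.sum_apply]
  exact Submodule.sum_mem _ fun x _ => by simpa using (hu x.1).mul (hv x.2) i j

theorem pol_trace {A : DolbeaultAlgebra Ω} {u v : (Matrix (Fin r) (Fin r) Ω)[X]}
    (hu : ∀ l, A.MPar 1 (u.coeff l)) (hv : ∀ l, A.MPar 1 (v.coeff l)) (l : ℕ) :
    ((u * v).coeff l).trace = ((v * u).coeff l).trace := by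
  rw [coeff_mul, coeff_mul, Matrix.trace_sum, Matrix.trace_sum,
    ← Finset.Nat.sum_antidiagonal_swap]
  exact Finset.sum_congr rfl fun x _ => (hu _).trace_even (hv _)

theorem pol_deriv_par {A : DolbeaultAlgebra Ω} {u : (Matrix (Fin r) (Fin r) Ω)[X]}
    (hu : ∀ l, A.MPar 1 (u.coeff l)) (l : ℕ) : A.MPar 1 ((derivative u).coeff l) := by
  intro i j
  have : (derivative u).coeff l = (l + 1) • u.coeff (l + 1) := by
    rw [coeff_derivative, nsmul_eq_mul, Nat.cast_comm]; push_cast; rfl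
  rw [this, Matrix.smul_apply]
  exact nsmul_mem (hu _ i j) _

theorem cpol_deriv {A : DolbeaultAlgebra Ω} (hT : A.MPar 1 T) (hB : A.MPar 1 B) (m : ℕ) :
    ∀ j l, (((cpol T B) ^ j * derivative ((cpol T B) ^ m)).coeff l).trace =
      m • ((C B * (cpol T B) ^ (j + m - 1)).coeff l).trace := by
  have hd : derivative (cpol T B) = C B := by simp [cpol]
  have hP := cpol_par hT hB
  have hC : ∀ l, A.MPar 1 ((C B : (Matrix (Fin r) (Fin r) Ω)[X]).coeff l) := by
    intro l
    rw [coeff_C]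
    split_ifs
    · exact hB
    · exact fun i j => zero_mem _
  induction m with
  | zero => intro j l; simp
  | succ m ih =>
    intro j l
    rw [pow_succ, derivative_mul, hd, mul_add, coeff_add, Matrix.trace_add, ← mul_assoc]
    have h1 : ∀ l, A.MPar 1 ((cpol T B).coeff l) := by simpa using hP 1
    rw [pol_trace (pol_par_mul (hP j) (pol_deriv_par (hP m))) h1, ← mul_assoc, ← pow_succ', ih,
      ← mul_assoc, ← pow_add, pol_trace (hP _) hC, succ_nsmul,
      show j + 1 + m - 1 = j + m by omega, show j + (m + 1) - 1 = j + m by omega]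

theorem cpol_key {A : DolbeaultAlgebra Ω} (hT : A.MPar 1 T) (hB : A.MPar 1 B) (m l : ℕ) :
    (l + 1) • (((cpol T B) ^ (m + 1)).coeff (l + 1)).trace =
      (m + 1) • (B * ((cpol T B) ^ m).coeff l).trace := by
  have h := cpol_deriv hT hB (m + 1) 0 l
  rw [pow_zero, one_mul, coeff_C_mul, coeff_derivative] at h
  rw [show 0 + (m + 1) - 1 = m by omega] at h
  rw [← h, ← Matrix.trace_smul, nsmul_eq_mul, Nat.cast_comm]
  push_cast; rfl

end

theorem coeff_unique {V : Type*} [AddCommGroup V] [Module ℂ V] (k : ℕ) (u v : ℕ → V)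
    (h : ∀ t : ℂ, ∑ l ∈ Finset.range k, t ^ l • u l = ∑ l ∈ Finset.range k, t ^ l • v l)
    (l : ℕ) (hl : l < k) : u l = v l := by
  rw [← sub_eq_zero, ← Module.forall_dual_apply_eq_zero_iff ℂ]
  intro φ
  have hp : (∑ l ∈ Finset.range k, C (φ (u l - v l)) * X ^ l : ℂ[X]) = 0 := by
    apply Polynomial.funext
    intro t
    have := congrArg φ (h t)
    simp only [map_sum, map_smul, smul_eq_mul] at this
    simp only [eval_finsetSum, eval_mul, eval_C, eval_pow, eval_X, eval_zero]
    simp only [map_sub, sub_mul, Finset.sum_sub_distrib]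
    rw [sub_eq_zero]
    simpa only [mul_comm] using this
  have := congrArg (fun p => p.coeff l) hp
  simp only [finsetSum_coeff, coeff_C_mul, coeff_X_pow, coeff_zero, mul_ite, mul_one, mul_zero,
    Finset.sum_ite_eq, Finset.mem_range, hl, if_true] at this
  exact this

section
variable {A : DolbeaultAlgebra Ω} {θ Θ : Matrix (Fin r) (Fin r) Ω}

theorem pd_W (ho : A.MPar (-1) θ) (he : A.MPar 1 Θ) (hB : A.MPar 1 (θ * θ))
    (hΘd : A.mpd Θ = Θ * θ - θ * Θ) (hBd : A.mpd (θ * θ) = 0) (m : ℕ) :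
    ∀ l, A.mpd (((cpol Θ (θ * θ)) ^ m).coeff l) =
      ((cpol Θ (θ * θ)) ^ m).coeff l * θ - θ * ((cpol Θ (θ * θ)) ^ m).coeff l := by
  have h1 : A.pd 1 = 0 := by
    have := A.pd_leibniz 1 1 A.one_mem
    simpa using this
  induction m with
  | zero =>
    intro l
    rw [pow_zero, coeff_one]
    split_ifs
    · ext i j
      simp only [mpd, Matrix.map_apply, Matrix.one_apply]
      split_ifs <;> simp [h1]
    · ext i j; simp [mpd]
  | succ m ih =>
    intro l
    cases l with
    | zero => rw [cpol_zero, he.pd_mul, ih, hΘd, one_smul]; noncomm_ring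
    | succ l =>
      rw [cpol_succ, mpd_add, he.pd_mul, hB.pd_mul, ih, ih, hΘd, hBd, one_smul, one_smul]
      noncomm_ring

theorem pdb_W (ho : A.MPar (-1) θ) (he : A.MPar 1 Θ) (hB : A.MPar 1 (θ * θ))
    (hΘd : A.mpdb Θ = 0) (hBd : A.mpdb (θ * θ) = Θ * θ - θ * Θ) (m : ℕ) :
    A.mpdb (((cpol Θ (θ * θ)) ^ m).coeff 0) = 0 ∧
    ∀ l, A.mpdb (((cpol Θ (θ * θ)) ^ m).coeff (l + 1)) =
      ((cpol Θ (θ * θ)) ^ m).coeff l * θ - θ * ((cpol Θ (θ * θ)) ^ m).coeff l := by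
  have h1 : A.pdb 1 = 0 := by
    have := A.pdb_leibniz 1 1 A.one_mem
    simpa using this
  induction m with
  | zero =>
    refine ⟨?_, fun l => ?_⟩
    · ext i j
      simp only [pow_zero, coeff_one_zero, mpdb, Matrix.map_apply, Matrix.one_apply]
      split_ifs <;> simp [h1]
    · rw [pow_zero, coeff_one, coeff_one, if_neg (by omega)]
      split_ifs <;> (ext i j; simp [mpdb])
  | succ m ih =>
    refine ⟨?_, fun l => ?_⟩
    · rw [cpol_zero, he.pdb_mul, hΘd, ih.1]; simp
    · rw [cpol_succ, mpdb_add, he.pdb_mul, hB.pdb_mul, ih.2, hΘd, hBd, one_smul, one_smul]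
      cases l with
      | zero => rw [cpol_zero, ih.1]; noncomm_ring
      | succ l => rw [cpol_succ, ih.2]; noncomm_ring

end

end DolbeaultAlgebra

/-- (Proposition: degree decomposition of the Chern–Simons form) Fix `k ≥ 1`, let `a l`
be the coefficients of `Tr(θ(Θ + tθ²)^(k-1)) = ∑ a_l tˡ` and set
`ω_(k+l,k-l-1) = (k! l! / (k+l)!) a_l`. Then the descent equations hold:
`∂̄ω_(k,k-1) = Tr(Θᵏ)`, `∂ω_(k+l,k-l-1) = ∂̄ω_(k+l+1,k-l-2)` for `0 ≤ l ≤ k-2`, and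
`∂ω_(2k-1,0) = 0`; moreover `ω_(2k-1,0) = (k!(k-1)!/(2k-1)!) Tr(θ^(2k-1))`; consequently
`Tr(Θᵏ) = (∂ + ∂̄)(∑_{l=0}^{k-1} (-1)ˡ ω_(k+l,k-l-1))`. -/
theorem stmt6
    (A : DolbeaultAlgebra Ω) (r : ℕ) (hr : 1 ≤ r)
    (θ Θ : Matrix (Fin r) (Fin r) Ω)
    (hθdeg : A.MatDeg 1 0 θ) (hθpd : A.mpd θ = -(θ * θ)) (hΘ : Θ = A.mpdb θ)
    (k : ℕ) (hk : 1 ≤ k) (a : ℕ → Ω)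
    (ha : ∀ t : ℂ, Matrix.trace (θ * (Θ + t • (θ * θ)) ^ (k - 1)) =
      ∑ l ∈ Finset.range k, t ^ l • a l)
    (ω : ℕ → Ω)
    (hω : ∀ l : ℕ, ω l =
      (((k.factorial : ℂ) * (l.factorial : ℂ)) / ((k + l).factorial : ℂ)) • a l) :
    A.pdb (ω 0) = Matrix.trace (Θ ^ k) ∧
    (∀ l : ℕ, l + 2 ≤ k → A.pd (ω l) = A.pdb (ω (l + 1))) ∧
    A.pd (ω (k - 1)) = 0 ∧
    ω (k - 1) = (((k.factorial : ℂ) * ((k - 1).factorial : ℂ)) / ((2 * k - 1).factorial : ℂ)) •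
      Matrix.trace (θ ^ (2 * k - 1)) ∧
    Matrix.trace (Θ ^ k) =
      A.pd (∑ l ∈ Finset.range k, ((-1 : ℂ) ^ l) • ω l) +
      A.pdb (∑ l ∈ Finset.range k, ((-1 : ℂ) ^ l) • ω l) := by
  obtain ⟨n, rfl⟩ : ∃ n, k = n + 1 := ⟨k - 1, by omega⟩
  simp only [Nat.add_sub_cancel] at ha ⊢
  have ho : A.MPar (-1) θ := fun i j => Submodule.subset_span ⟨1, 0, by simp, hθdeg i j⟩
  have he : A.MPar 1 Θ := by
    intro i j
    rw [hΘ]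
    exact Submodule.subset_span ⟨1, 1, by norm_num, A.pdb_mem (hθdeg i j)⟩
  have hB : A.MPar 1 (θ * θ) := by simpa using ho.mul ho
  have hBd : A.mpd (θ * θ) = 0 := by
    rw [ho.pd_mul, hθpd, neg_smul, one_smul]; noncomm_ring
  have hBdb : A.mpdb (θ * θ) = Θ * θ - θ * Θ := by
    rw [ho.pdb_mul, ← hΘ, neg_smul, one_smul]; noncomm_ring
  have hΘdb : A.mpdb Θ = 0 := by
    ext i j; rw [hΘ]; exact A.pdb_pdb _
  have hΘd : A.mpd Θ = Θ * θ - θ * Θ := by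
    rw [← hBdb]
    have h2 : θ * θ = - A.mpd θ := by rw [hθpd, neg_neg]
    rw [h2, hΘ]
    ext i j
    have := A.pd_pdb (θ i j)
    simp only [DolbeaultAlgebra.mpd, DolbeaultAlgebra.mpdb, Matrix.map_apply, Matrix.neg_apply,
      map_neg]
    exact eq_neg_of_add_eq_zero_left this
  set W := fun m l => ((DolbeaultAlgebra.cpol Θ (θ * θ)) ^ m).coeff l with hW
  have hWe : ∀ m l, A.MPar 1 (W m l) := DolbeaultAlgebra.cpol_par he hB
  have hWd : ∀ m l, A.mpd (W m l) = W m l * θ - θ * W m l :=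
    DolbeaultAlgebra.pd_W ho he hB hΘd hBd
  have hWdb := DolbeaultAlgebra.pdb_W ho he hB hΘdb hBdb n
  have ha' : ∀ l, l < n + 1 → a l = (θ * W n l).trace := by
    refine DolbeaultAlgebra.coeff_unique (n + 1) _ _ fun t => ?_
    rw [← ha t, DolbeaultAlgebra.cpol_eval, Finset.mul_sum, Matrix.trace_sum]
    refine Finset.sum_congr rfl fun l _ => ?_
    rw [mul_smul_comm, Matrix.trace_smul]
  have hcyc : ∀ l, (θ * (W n l * θ)).trace = -(θ * θ * W n l).trace := by
    intro l
    have h3 : A.MPar (-1) (θ * W n l) := by simpa using ho.mul (hWe n l)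
    rw [← mul_assoc, h3.trace_odd ho, mul_assoc]
  have hpa : ∀ l, l < n + 1 → A.pd (a l) = (θ * θ * W n l).trace := by
    intro l hl
    rw [ha' l hl, A.pd_trace, ho.pd_mul, hθpd, hWd, neg_smul, one_smul, mul_sub, ← mul_assoc θ θ,
      Matrix.trace_add, Matrix.trace_neg, Matrix.trace_sub, hcyc, neg_mul, Matrix.trace_neg]
    abel
  have hpb0 : A.pdb (a 0) = (Θ ^ (n + 1)).trace := by
    rw [ha' 0 (by omega), A.pdb_trace, ho.pdb_mul, ← hΘ, hWdb.1, mul_zero, smul_zero, add_zero,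
      ← DolbeaultAlgebra.cpol_zero' Θ (θ * θ), DolbeaultAlgebra.cpol_zero]
  have hpb : ∀ l, l + 1 < n + 1 → A.pdb (a (l + 1)) =
      (W (n + 1) (l + 1)).trace + (θ * θ * W n l).trace := by
    intro l hl
    have h4 : W (n + 1) (l + 1) = Θ * W n (l + 1) + θ * θ * W n l :=
      DolbeaultAlgebra.cpol_succ _ _ _ _
    rw [ha' _ hl, A.pdb_trace, ho.pdb_mul, ← hΘ, hWdb.2, h4, neg_smul, one_smul, mul_sub,
      ← mul_assoc θ θ, Matrix.trace_add, Matrix.trace_neg, Matrix.trace_sub, hcyc,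
      Matrix.trace_add]
    abel
  have hkey : ∀ l : ℕ, ((l : ℂ) + 1) • (W (n + 1) (l + 1)).trace =
      ((n : ℂ) + 1) • (θ * θ * W n l).trace := by
    intro l
    have := DolbeaultAlgebra.cpol_key he hB n l
    rw [← Nat.cast_smul_eq_nsmul ℂ, ← Nat.cast_smul_eq_nsmul ℂ (n + 1)] at this
    exact_mod_cast this
  have hWn : W n n = (θ * θ) ^ n := DolbeaultAlgebra.cpol_top _ _ _
  have c1 : A.pdb (ω 0) = Matrix.trace (Θ ^ (n + 1)) := by
    rw [hω, map_smul, hpb0]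
    have : ((n + 1).factorial : ℂ) ≠ 0 := by exact_mod_cast Nat.factorial_ne_zero _
    simp [this]
  have c2 : ∀ l : ℕ, l + 2 ≤ n + 1 → A.pd (ω l) = A.pdb (ω (l + 1)) := by
    intro l hl
    have hl1 : ((l : ℂ) + 1) ≠ 0 := by exact_mod_cast Nat.succ_ne_zero l
    have hs : (W (n + 1) (l + 1)).trace =
        (((n : ℂ) + 1) / (l + 1)) • (θ * θ * W n l).trace := by
      rw [div_eq_inv_mul, mul_smul, ← hkey, smul_smul, inv_mul_cancel₀ hl1, one_smul]
    rw [hω, hω, map_smul, map_smul, hpa l (by omega), hpb l (by omega), hs]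
    nth_rewrite 3 [← one_smul ℂ (θ * θ * W n l).trace]
    rw [← add_smul, smul_smul]
    congr 1
    rw [show n + 1 + (l + 1) = (n + 1 + l) + 1 by ring, Nat.factorial_succ (n + 1 + l),
      Nat.factorial_succ l]
    have h5 : ((n + 1 + l).factorial : ℂ) ≠ 0 := by exact_mod_cast Nat.factorial_ne_zero _
    have h6 : ((n : ℂ) + 1 + l + 1) ≠ 0 := by exact_mod_cast Nat.succ_ne_zero (n + 1 + l)
    push_cast
    field_simp
    ring
  have c3 : A.pd (ω n) = 0 := by
    rw [hω, map_smul, hpa n (by omega)]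
    have h7 := hcyc n
    have h8 : θ * (W n n * θ) = θ * θ * W n n := by
      rw [hWn, ← pow_two, ← pow_mul, ← pow_succ, ← pow_succ', ← pow_add]
      congr 1; ring
    rw [h8] at h7
    have h9 : (2 : ℂ) • (θ * θ * W n n).trace = 0 := by
      rw [two_smul]; nth_rewrite 1 [h7]; simp
    rw [(smul_eq_zero_iff_right (two_ne_zero)).1 h9, smul_zero]
  refine ⟨c1, c2, c3, ?_, ?_⟩
  · rw [hω, ha' n (by omega), hWn, ← pow_two, ← pow_mul, ← pow_succ',
      show 2 * (n + 1) - 1 = 2 * n + 1 by omega, show n + 1 + n = 2 * n + 1 by ring]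
  · simp only [map_sum, map_smul]
    rw [Finset.sum_range_succ, c3, Finset.sum_range_succ' _ n, c1]
    have : ∑ l ∈ Finset.range n, (-1 : ℂ) ^ (l + 1) • A.pdb (ω (l + 1)) =
        - ∑ l ∈ Finset.range n, (-1 : ℂ) ^ l • A.pd (ω l) := by
      rw [← Finset.sum_neg_distrib]
      refine Finset.sum_congr rfl fun l hl => ?_
      rw [← c2 l (by have := Finset.mem_range.1 hl; omega), pow_succ, mul_neg_one, neg_smul]
    rw [this]; simp
end

section
/- In the Cholesky setting the curvature satisfies 𝚯 = b⁻¹(∂̄θ − θ̄₁θ − θθ̄₁)b. -/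
namespace DolbeaultAlgebra

variable {Ω : Type*} [Ring Ω] [Algebra ℂ Ω] {r : ℕ}

theorem mpd_mul0 (A : DolbeaultAlgebra Ω) (M N : Matrix (Fin r) (Fin r) Ω)
    (hM : A.MatDeg 0 0 M) : A.mpd (M * N) = A.mpd M * N + M * A.mpd N := by
  ext i j
  simp only [mpd, Matrix.map_apply, Matrix.mul_apply, Matrix.add_apply, map_sum]
  rw [← Finset.sum_add_distrib]
  refine Finset.sum_congr rfl fun k _ => ?_
  rw [A.pd_leibniz _ _ (hM i k)]
  simp

theorem mpdb_mul0 (A : DolbeaultAlgebra Ω) (M N : Matrix (Fin r) (Fin r) Ω)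
    (hM : A.MatDeg 0 0 M) : A.mpdb (M * N) = A.mpdb M * N + M * A.mpdb N := by
  ext i j
  simp only [mpdb, Matrix.map_apply, Matrix.mul_apply, Matrix.add_apply, map_sum]
  rw [← Finset.sum_add_distrib]
  refine Finset.sum_congr rfl fun k _ => ?_
  rw [A.pdb_leibniz _ _ (hM i k)]
  simp

theorem mpdb_mul1 (A : DolbeaultAlgebra Ω) (M N : Matrix (Fin r) (Fin r) Ω)
    (hM : A.MatDeg 1 0 M) : A.mpdb (M * N) = A.mpdb M * N - M * A.mpdb N := by
  ext i j
  simp only [mpdb, Matrix.map_apply, Matrix.mul_apply, Matrix.sub_apply, map_sum]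
  rw [← Finset.sum_sub_distrib]
  refine Finset.sum_congr rfl fun k _ => ?_
  rw [A.pdb_leibniz _ _ (hM i k)]
  simp [sub_eq_add_neg]

theorem pdb_one (A : DolbeaultAlgebra Ω) : A.pdb 1 = 0 := by
  have := A.pdb_leibniz 1 1 A.one_mem
  simpa using this

theorem mpdb_one (A : DolbeaultAlgebra Ω) :
    A.mpdb (1 : Matrix (Fin r) (Fin r) Ω) = 0 := by
  ext i j
  by_cases hij : i = j <;> simp [mpdb, Matrix.one_apply, hij, pdb_one]

theorem MatDeg.mul {A : DolbeaultAlgebra Ω} {p q p' q' : ℕ} {M N : Matrix (Fin r) (Fin r) Ω}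
    (hM : A.MatDeg p q M) (hN : A.MatDeg p' q' N) : A.MatDeg (p + p') (q + q') (M * N) := by
  intro i j
  rw [Matrix.mul_apply]
  exact Submodule.sum_mem _ fun k _ => A.mul_mem (hM i k) (hN k j)

end DolbeaultAlgebra

variable {Ω : Type*} [Ring Ω] [Algebra ℂ Ω]

/-- In the Cholesky setting the curvature satisfies
`BΘ = b⁻¹(∂̄θ - θ̄₁θ - θθ̄₁)b`. -/
theorem stmt9
    (A : DolbeaultAlgebra Ω) (r : ℕ) (hr : 1 ≤ r)
    (b c binv cinv : Matrix (Fin r) (Fin r) Ω)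
    (hbdeg : A.MatDeg 0 0 b) (hcdeg : A.MatDeg 0 0 c)
    (hbinvdeg : A.MatDeg 0 0 binv) (hcinvdeg : A.MatDeg 0 0 cinv)
    (hbu : ∀ i j : Fin r, j < i → b i j = 0) (hbd : ∀ i : Fin r, b i i = 1)
    (hcl : ∀ i j : Fin r, i < j → c i j = 0)
    (hbinvl : binv * b = 1) (hbinvr : b * binv = 1)
    (hcinvl : cinv * c = 1) (hcinvr : c * cinv = 1)
    (h hinv : Matrix (Fin r) (Fin r) Ω) (hh : h = c * b) (hhinv : hinv = binv * cinv)
    (θ₁ θ₂ θ θb₁ θb₂ θb : Matrix (Fin r) (Fin r) Ω)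
    (hθ₁ : θ₁ = A.mpd b * binv) (hθ₂ : θ₂ = cinv * A.mpd c) (hθ : θ = θ₁ + θ₂)
    (hθb₁ : θb₁ = A.mpdb b * binv) (hθb₂ : θb₂ = cinv * A.mpdb c) (hθb : θb = θb₁ + θb₂)
    (Bθ Bθb BΘ : Matrix (Fin r) (Fin r) Ω)
    (hBθ : Bθ = hinv * A.mpd h) (hBθb : Bθb = hinv * A.mpdb h) (hBΘ : BΘ = A.mpdb Bθ) :
    BΘ = binv * (A.mpdb θ - θb₁ * θ - θ * θb₁) * b := by
  have hpb : A.MatDeg 1 0 (A.mpd b) := fun i j => A.pd_mem (hbdeg i j)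
  have hpc : A.MatDeg 1 0 (A.mpd c) := fun i j => A.pd_mem (hcdeg i j)
  have hθdeg : A.MatDeg 1 0 θ := by
    intro i j
    rw [hθ, hθ₁, hθ₂]
    exact Submodule.add_mem _ ((hpb.mul hbinvdeg) i j) ((hcinvdeg.mul hpc) i j)
  have hB : Bθ = binv * (θ * b) := by
    rw [hBθ, hhinv, hh, A.mpd_mul0 _ _ hcdeg, hθ, hθ₁, hθ₂]
    simp only [mul_add, add_mul, mul_assoc, hbinvl, mul_one]
    rw [← mul_assoc cinv c, hcinvl, one_mul, add_comm]
  have hinvd : A.mpdb binv = -(binv * θb₁) := by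
    have h1 := A.mpdb_mul0 _ b hbinvdeg
    rw [hbinvl, A.mpdb_one] at h1
    have h2 := congrArg (· * binv) h1
    simp only [zero_mul, add_mul, mul_assoc, hbinvr, mul_one] at h2
    rw [hθb₁]
    exact eq_neg_of_add_eq_zero_left h2.symm
  have hdb : A.mpdb b = θb₁ * b := by rw [hθb₁, mul_assoc, hbinvl, mul_one]
  rw [hBΘ, hB, A.mpdb_mul0 _ _ hbinvdeg, A.mpdb_mul1 _ _ hθdeg, hinvd, hdb]
  noncomm_ring
end
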